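/- Let K be a compact metric space (possibly infinite dimensional) with dim K > 0, and let σ: K^ℤ → K^ℤ be the full shift on the alphabet K. Then mdim(K^ℤ, σ) ≥ 1. -/

import Mathlib

open Filter Set
open scoped ENNReal

namespace MeanDimPaper

variable {X : Type*} [TopologicalSpace X]

/-- `α` is an open cover of `X`. -/
def IsOpenCover (α : Set (Set X)) : Prop :=
  (∀ U ∈ α, IsOpen U) ∧ ⋃₀ α = Set.univ

/-- The order of a cover `α`: the maximum `n ≥ 0` such that there exist `n + 1`
pairwise distinct members of `α` with nonempty common intersection. -/
noncomputable def ord (α : Set (Set X)) : ℕ∞ :=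
  ⨆ n ∈ {n : ℕ | ∃ f : Fin (n + 1) → Set X,
      Function.Injective f ∧ (∀ i, f i ∈ α) ∧ (⋂ i, f i).Nonempty}, (n : ℕ∞)

/-- `β` refines `α`: every member of `β` is contained in some member of `α`. -/
def Refines (β α : Set (Set X)) : Prop := ∀ V ∈ β, ∃ U ∈ α, V ⊆ U

/-- `D(α)`: the minimum of `ord β` over open covers `β` refining `α`. -/
noncomputable def covD (α : Set (Set X)) : ℕ∞ :=
  ⨅ β ∈ {β : Set (Set X) | IsOpenCover β ∧ Refines β α}, ord β

/-- Topological (covering) dimension: the supremum of `D(α)` over open covers `α`. -/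
noncomputable def topDim (X : Type*) [TopologicalSpace X] : ℕ∞ :=
  ⨆ α ∈ {α : Set (Set X) | IsOpenCover α}, covD α

/-- Diameter of a set with respect to a distance function `d`. -/
noncomputable def diamD (d : X → X → ℝ) (U : Set X) : ℝ :=
  sSup {r | ∃ x ∈ U, ∃ y ∈ U, r = d x y}

/-- Mesh of a cover: the supremum of the diameters of its members. -/
noncomputable def mesh (d : X → X → ℝ) (α : Set (Set X)) : ℝ :=
  sSup (diamD d '' α)

/-- `widim_ε(X, d)`: the minimum of `D(α)` over open covers `α` with `mesh(α, d) < ε`. -/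
noncomputable def widim (ε : ℝ) (d : X → X → ℝ) : ℕ∞ :=
  ⨅ α ∈ {α : Set (Set X) | IsOpenCover α ∧ mesh d α < ε}, covD α

/-- `d` is a metric on `X` compatible with the topology of `X`. -/
structure IsCompatMetric {X : Type*} [TopologicalSpace X] (d : X → X → ℝ) : Prop where
  refl : ∀ x, d x x = 0
  eq_of : ∀ x y, d x y = 0 → x = y
  symm : ∀ x y, d x y = d y x
  triangle : ∀ x y z, d x z ≤ d x y + d y z
  isOpen_iff : ∀ U : Set X, IsOpen U ↔ ∀ x ∈ U, ∃ ε > 0, ∀ y, d x y < ε → y ∈ U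

/-- The dynamical distance `d_n(x, y) = max_{0 ≤ i < n} d(Tⁱ x, Tⁱ y)`. -/
noncomputable def dynDist (d : X → X → ℝ) (T : X → X) (n : ℕ) (x y : X) : ℝ :=
  sSup {r | ∃ i < n, r = d (T^[i] x) (T^[i] y)}

/-- Mean dimension `mdim(X, T)` computed with the metric `d`:
`lim_{ε → 0} lim_{n → ∞} widim_ε(X, d_n) / n`.  The inner limit exists (by
subadditivity of `n ↦ widim_ε(X, d_n)`) so it coincides with the liminf, and the inner
quantity is monotone as `ε` decreases, so the limit as `ε → 0` is the supremum over
`ε > 0`. -/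
noncomputable def mdim (T : X → X) (d : X → X → ℝ) : ℝ≥0∞ :=
  ⨆ (ε : ℝ) (_ : 0 < ε),
    Filter.liminf (fun n : ℕ => (widim ε (dynDist d T n) : ℝ≥0∞) / (n : ℝ≥0∞)) Filter.atTop

/-- The full shift `σ` on the alphabet `K`: `σ((xₙ)ₙ) = (xₙ₊₁)ₙ`. -/
def shift (K : Type*) : (ℤ → K) → ℤ → K := fun x n => x (n + 1)

/-- `Door f n k`: the labels of the indices other than `k` cover `{0, …, n-1}`. -/
def Door (f : ℕ → ℕ) (n k : ℕ) : Prop := ∀ t < n, ∃ j ≤ n, j ≠ k ∧ f j = t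

lemma door_inj {f : ℕ → ℕ} {n k : ℕ} (hk : k ≤ n) (h : Door f n k) :
    (∀ j ≤ n, j ≠ k → f j < n) ∧
      ∀ i ≤ n, ∀ j ≤ n, i ≠ k → j ≠ k → f i = f j → i = j := by
  classical
  set s := (Finset.range (n + 1)).erase k with hs
  have hcard : s.card = n := by
    rw [hs, Finset.card_erase_of_mem (Finset.mem_range.2 (by omega))]; simp
  have hsub : Finset.range n ⊆ s.image f := by
    intro t ht
    obtain ⟨j, hj, hjk, rfl⟩ := h t (Finset.mem_range.1 ht)
    exact Finset.mem_image_of_mem f (by simp [hs, hjk]; omega)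
  have hle : (s.image f).card ≤ (Finset.range n).card := by
    simpa [hcard] using (Finset.card_image_le : (s.image f).card ≤ s.card)
  have heq := Finset.eq_of_subset_of_card_le hsub hle
  have hinj : Set.InjOn f s := Finset.card_image_iff.1 (by rw [← heq, hcard]; simp)
  constructor
  · intro j hj hjk
    have : f j ∈ Finset.range n := by
      rw [heq]; exact Finset.mem_image_of_mem f (by simp [hs, hjk]; omega)
    exact Finset.mem_range.1 this
  · intro i hi j hj hik hjk hij
    exact hinj (by simp [hs, hik]; omega) (by simp [hs, hjk]; omega) hij

open Classical in
lemma door_parity (f : ℕ → ℕ) (n : ℕ) (hf : ∀ j ≤ n, f j ≤ n) :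
    ∑ k ∈ Finset.range (n + 1), (if Door f n k then (1 : ZMod 2) else 0) =
      if ∀ t ≤ n, ∃ j ≤ n, f j = t then 1 else 0 := by
  rw [← Finset.sum_filter]
  by_cases hex : ∃ k ≤ n, Door f n k
  · obtain ⟨k, hk, hd⟩ := hex
    have h1 := door_inj hk hd
    by_cases hkn : f k = n
    · have hfull : ∀ t ≤ n, ∃ j ≤ n, f j = t := by
        intro t ht
        rcases ht.lt_or_eq with h | rfl
        · obtain ⟨j, hj, -, e⟩ := hd t h
          exact ⟨j, hj, e⟩
        · exact ⟨k, hk, hkn⟩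
      rw [if_pos hfull]
      have : (Finset.range (n + 1)).filter (Door f n) = {k} := by
        ext j
        simp only [Finset.mem_filter, Finset.mem_range, Finset.mem_singleton]
        constructor
        · rintro ⟨hj, hdj⟩
          by_contra hne
          have := (door_inj (by omega) hdj).1 k hk (Ne.symm hne)
          omega
        · rintro rfl
          exact ⟨by omega, hd⟩
      rw [this]; simp
    · have hkn' : f k < n := lt_of_le_of_ne (hf k hk) hkn
      obtain ⟨j, hj, hjk, hjf⟩ := hd _ hkn'
      have hnf : ¬ ∀ t ≤ n, ∃ j ≤ n, f j = t := by
        intro h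
        obtain ⟨i, hi, hin⟩ := h n le_rfl
        by_cases hik : i = k
        · subst hik; exact hkn hin
        · have := h1.1 i hi hik; omega
      rw [if_neg hnf]
      have : (Finset.range (n + 1)).filter (Door f n) = {k, j} := by
        ext i
        simp only [Finset.mem_filter, Finset.mem_range, Finset.mem_singleton, Finset.mem_insert]
        constructor
        · rintro ⟨hi, hdi⟩
          by_contra hne
          push Not at hne
          exact hjk ((door_inj (by omega) hdi).2 j hj k hk (Ne.symm hne.2) (Ne.symm hne.1) hjf)
        · rintro (rfl | rfl)
          · exact ⟨by omega, hd⟩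
          · refine ⟨by omega, fun t ht => ?_⟩
            obtain ⟨l, hl, hlk, e⟩ := hd t ht
            by_cases hli : l = i
            · subst hli
              exact ⟨k, hk, Ne.symm hlk, by omega⟩
            · exact ⟨l, hl, hli, e⟩
      rw [this, Finset.sum_pair (Ne.symm hjk)]
      decide
  · have hnf : ¬ ∀ t ≤ n, ∃ j ≤ n, f j = t := by
      intro h
      obtain ⟨k, hk, hkn⟩ := h n le_rfl
      refine hex ⟨k, hk, fun t ht => ?_⟩
      obtain ⟨j, hj, e⟩ := h t ht.le
      exact ⟨j, hj, by rintro rfl; omega, e⟩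
    rw [if_neg hnf]
    apply Finset.sum_eq_zero
    intro k hk
    simp only [Finset.mem_filter, Finset.mem_range] at hk
    exact absurd ⟨k, by omega, hk.2⟩ hex

/-- The `j`-th vertex of the Kuhn simplex with base `b` and permutation `τ`. -/
def vtx {n : ℕ} (b : Fin n → ℕ) (τ : Equiv.Perm (Fin n)) (j : ℕ) : Fin n → ℕ :=
  fun x => b x + if j ≤ (τ x : ℕ) then 1 else 0

lemma rot_val {n : ℕ} (y : Fin (n + 1)) :
    (finRotate (n + 1) y : ℕ) = if (y : ℕ) = n then 0 else (y : ℕ) + 1 := by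
  have := coe_finRotate y
  rw [this]
  simp [Fin.ext_iff]

lemma rot_symm_val {n : ℕ} (y : Fin (n + 1)) :
    ((finRotate (n + 1)).symm y : ℕ) = if (y : ℕ) = 0 then n else (y : ℕ) - 1 := by
  have := rot_val ((finRotate (n + 1)).symm y)
  rw [Equiv.apply_symm_apply] at this
  have h2 := ((finRotate (n + 1)).symm y).2
  split_ifs at this ⊢ <;> omega

/-- Pivot. -/
noncomputable def piv {n : ℕ} (a : (Fin (n + 1) → ℕ) × Equiv.Perm (Fin (n + 1)) × ℕ) :
    (Fin (n + 1) → ℕ) × Equiv.Perm (Fin (n + 1)) × ℕ :=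
  if a.2.2 = 0 then
    (Function.update a.1 (a.2.1.symm 0) (a.1 (a.2.1.symm 0) - 1),
      a.2.1.trans (finRotate (n + 1)).symm, n + 1)
  else if a.2.2 = n + 1 then
    (Function.update a.1 (a.2.1.symm (Fin.last n)) (a.1 (a.2.1.symm (Fin.last n)) + 1),
      a.2.1.trans (finRotate (n + 1)), 0)
  else (a.1, a.2.1.trans (Equiv.swap (Fin.ofNat (n + 1) (a.2.2 - 1)) (Fin.ofNat (n + 1) a.2.2)),
    a.2.2)

lemma vtx_down {n : ℕ} (b : Fin (n + 1) → ℕ) (τ : Equiv.Perm (Fin (n + 1)))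
    (hb : 1 ≤ b (τ.symm 0)) (j : ℕ) (hj : j ≤ n) :
    vtx (Function.update b (τ.symm 0) (b (τ.symm 0) - 1)) (τ.trans (finRotate (n + 1)).symm) j
      = vtx b τ (j + 1) := by
  funext x
  simp only [vtx, Equiv.trans_apply, rot_symm_val]
  by_cases hx : x = τ.symm 0
  · subst hx
    simp [hj]; omega
  · have : (τ x : ℕ) ≠ 0 := by
      intro h
      exact hx (by rw [Equiv.eq_symm_apply]; exact Fin.ext (by simpa using h))
    rw [Function.update_of_ne hx]
    simp only [this, if_false]
    congr 1
    split_ifs <;> omega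

lemma vtx_up {n : ℕ} (b : Fin (n + 1) → ℕ) (τ : Equiv.Perm (Fin (n + 1))) (j : ℕ) (hj : j ≤ n) :
    vtx (Function.update b (τ.symm (Fin.last n)) (b (τ.symm (Fin.last n)) + 1))
      (τ.trans (finRotate (n + 1))) (j + 1) = vtx b τ j := by
  funext x
  simp only [vtx, Equiv.trans_apply, rot_val]
  by_cases hx : x = τ.symm (Fin.last n)
  · subst hx
    simp [hj]
  · have : (τ x : ℕ) ≠ n := by
      intro h
      exact hx (by rw [Equiv.eq_symm_apply]; exact Fin.ext (by simpa using h))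
    rw [Function.update_of_ne hx]
    simp only [this, if_false]
    congr 1
    split_ifs <;> omega

lemma vtx_swap {n : ℕ} (b : Fin (n + 1) → ℕ) (τ : Equiv.Perm (Fin (n + 1))) (k j : ℕ)
    (hk : 1 ≤ k) (hkn : k ≤ n) (hj : j ≠ k) :
    vtx b (τ.trans (Equiv.swap (Fin.ofNat (n + 1) (k - 1)) (Fin.ofNat (n + 1) k))) j
      = vtx b τ j := by
  funext x
  have e1 : ((Fin.ofNat (n + 1) (k - 1) : Fin (n + 1)) : ℕ) = k - 1 := by
    simp [Fin.ofNat, Nat.mod_eq_of_lt (show k - 1 < n + 1 by omega)]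
  have e2 : ((Fin.ofNat (n + 1) k : Fin (n + 1)) : ℕ) = k := by
    simp [Fin.ofNat, Nat.mod_eq_of_lt (show k < n + 1 by omega)]
  simp only [vtx, Equiv.trans_apply, Equiv.swap_apply_def, Fin.ext_iff, e1, e2]
  congr 1
  split_ifs <;> omega

/-- Boundary condition on labels. -/
def Good (n m : ℕ) (L : (Fin n → ℕ) → ℕ) : Prop :=
  ∀ v : Fin n → ℕ, (∀ i, v i ≤ m) → L v ≤ n ∧
    ∀ i : Fin n, (v i = 0 → L v + i < n) ∧ (v i = m → L v + i + 1 ≠ n)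

/-- Boundary doors. -/
def Bdry {n : ℕ} (a : (Fin (n + 1) → ℕ) × Equiv.Perm (Fin (n + 1)) × ℕ) : Prop :=
  a.2.2 = 0 ∧ a.1 0 = 0 ∧ a.2.1 0 = 0

lemma vtx_le {n m : ℕ} {b : Fin n → ℕ} (hb : ∀ i, b i < m) (τ : Equiv.Perm (Fin n)) (j : ℕ) :
    ∀ i, vtx b τ j i ≤ m := by
  intro i
  have := hb i
  simp only [vtx]
  split_ifs <;> omega

/-- State predicate. -/
def St (n m : ℕ) (L : (Fin (n + 1) → ℕ) → ℕ)
    (a : (Fin (n + 1) → ℕ) × Equiv.Perm (Fin (n + 1)) × ℕ) : Prop :=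
  (∀ i, a.1 i < m) ∧ a.2.2 ≤ n + 1 ∧ Door (fun j => L (vtx a.1 a.2.1 j)) (n + 1) a.2.2 ∧ ¬ Bdry a

lemma piv_down {n : ℕ} (b : Fin (n + 1) → ℕ) (τ : Equiv.Perm (Fin (n + 1))) :
    piv (b, τ, 0) = (Function.update b (τ.symm 0) (b (τ.symm 0) - 1),
      τ.trans (finRotate (n + 1)).symm, n + 1) := by simp [piv]

lemma piv_up {n : ℕ} (b : Fin (n + 1) → ℕ) (τ : Equiv.Perm (Fin (n + 1))) :
    piv (b, τ, n + 1) = (Function.update b (τ.symm (Fin.last n)) (b (τ.symm (Fin.last n)) + 1),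
      τ.trans (finRotate (n + 1)), 0) := by simp [piv]

lemma piv_mid {n : ℕ} (b : Fin (n + 1) → ℕ) (τ : Equiv.Perm (Fin (n + 1))) (k : ℕ)
    (h0 : k ≠ 0) (hn : k ≠ n + 1) :
    piv (b, τ, k) = (b, τ.trans (Equiv.swap (Fin.ofNat (n + 1) (k - 1)) (Fin.ofNat (n + 1) k)),
      k) := by simp [piv, h0, hn]

lemma st_pos {n m : ℕ} {L : (Fin (n + 1) → ℕ) → ℕ} (hL : Good (n + 1) m L)
    {b : Fin (n + 1) → ℕ} {τ : Equiv.Perm (Fin (n + 1))} (h : St n m L (b, τ, 0)) :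
    1 ≤ b (τ.symm 0) := by
  obtain ⟨hb, -, hd, hB⟩ := h
  by_contra hlt
  have h0 : b (τ.symm 0) = 0 := by omega
  obtain ⟨j, hj, hj0, e⟩ := hd n (by omega)
  dsimp only at e hj0
  have := ((hL _ (vtx_le (b := b) hb τ j)).2 (τ.symm 0)).1 (by simp [vtx, h0]; omega)
  rw [e] at this
  have hx : τ.symm 0 = 0 := Fin.ext (by rw [Fin.val_zero]; omega)
  refine hB ⟨rfl, ?_, ?_⟩
  · rw [hx] at h0; exact h0
  · exact ((Equiv.symm_apply_eq _).1 hx).symm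

lemma st_lt {n m : ℕ} {L : (Fin (n + 1) → ℕ) → ℕ} (hL : Good (n + 1) m L)
    {b : Fin (n + 1) → ℕ} {τ : Equiv.Perm (Fin (n + 1))} (h : St n m L (b, τ, n + 1)) :
    b (τ.symm (Fin.last n)) + 1 < m := by
  obtain ⟨hb, -, hd, hB⟩ := h
  have hb' := hb (τ.symm (Fin.last n))
  dsimp only at hb'
  by_contra hlt
  have h0 : b (τ.symm (Fin.last n)) + 1 = m := by omega
  have hx := (τ.symm (Fin.last n)).2
  obtain ⟨j, hj, hj0, e⟩ := hd (n - (τ.symm (Fin.last n) : ℕ)) (by omega)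
  dsimp only at e hj0
  have := ((hL _ (vtx_le (b := b) hb τ j)).2 (τ.symm (Fin.last n))).2
    (by simp [vtx, ← h0]; omega)
  rw [e] at this
  omega

lemma piv_st {n m : ℕ} {L : (Fin (n + 1) → ℕ) → ℕ} (hL : Good (n + 1) m L)
    (a : (Fin (n + 1) → ℕ) × Equiv.Perm (Fin (n + 1)) × ℕ) (h : St n m L a) :
    St n m L (piv a) := by
  obtain ⟨b, τ, k⟩ := a
  by_cases h0 : k = 0
  · subst h0
    have hp := st_pos hL h
    obtain ⟨hb, -, hd, hB⟩ := h
    rw [piv_down]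
    refine ⟨fun i => ?_, le_rfl, ?_, ?_⟩
    · have := hb i
      by_cases hi : i = τ.symm 0
      · subst hi; simp; dsimp only at this; omega
      · simp only [Function.update_of_ne hi]; exact this
    · intro t ht
      obtain ⟨j, hj, hj0, e⟩ := hd t ht
      dsimp only at e hj0 ⊢
      refine ⟨j - 1, by omega, by omega, ?_⟩
      rw [vtx_down b τ hp _ (by omega), show j - 1 + 1 = j by omega, e]
    · rintro ⟨h, -⟩
      simp at h
  by_cases hn : k = n + 1
  · subst hn
    have hp := st_lt hL h
    obtain ⟨hb, -, hd, hB⟩ := h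
    rw [piv_up]
    refine ⟨fun i => ?_, by simp, ?_, ?_⟩
    · by_cases hi : i = τ.symm (Fin.last n)
      · subst hi; simpa using hp
      · simp only [Function.update_of_ne hi]; exact hb i
    · intro t ht
      obtain ⟨j, hj, hj0, e⟩ := hd t ht
      dsimp only at e hj0 ⊢
      refine ⟨j + 1, by omega, by omega, ?_⟩
      rw [vtx_up b τ _ (by omega), e]
    · rintro ⟨-, h1, h2⟩
      dsimp only at h1 h2
      have h3 : τ 0 = Fin.last n := by
        rw [Equiv.trans_apply] at h2
        apply (finRotate (n + 1)).injective
        rw [h2, finRotate_last]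
      have h4 : (0 : Fin (n + 1)) = τ.symm (Fin.last n) := by rw [← h3]; simp
      rw [← h4] at h1
      simp at h1
  · obtain ⟨hb, hk, hd, hB⟩ := h
    dsimp only at hk
    rw [piv_mid b τ k h0 hn]
    refine ⟨hb, hk, ?_, fun h => h0 h.1⟩
    intro t ht
    obtain ⟨j, hj, hj0, e⟩ := hd t ht
    dsimp only at e hj0 ⊢
    refine ⟨j, hj, hj0, ?_⟩
    rw [vtx_swap b τ k j (by omega) (by omega) hj0, e]

lemma piv_piv {n m : ℕ} {L : (Fin (n + 1) → ℕ) → ℕ} (hL : Good (n + 1) m L)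
    (a : (Fin (n + 1) → ℕ) × Equiv.Perm (Fin (n + 1)) × ℕ) (h : St n m L a) :
    piv (piv a) = a := by
  obtain ⟨b, τ, k⟩ := a
  by_cases h0 : k = 0
  · subst h0
    have hp := st_pos hL h
    rw [piv_down, piv_up]
    have hx : (τ.trans (finRotate (n + 1)).symm).symm (Fin.last n) = τ.symm 0 := by
      rw [Equiv.symm_trans_apply, Equiv.symm_symm, finRotate_last]
    rw [hx]
    refine Prod.ext ?_ (Prod.ext ?_ rfl)
    · simp [Nat.sub_add_cancel hp]
    · ext x; simp only [Equiv.trans_apply, Equiv.apply_symm_apply]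
  by_cases hn : k = n + 1
  · subst hn
    rw [piv_up, piv_down]
    have hx : (τ.trans (finRotate (n + 1))).symm 0 = τ.symm (Fin.last n) := by
      rw [Equiv.symm_trans_apply]
      congr 1
    rw [hx]
    refine Prod.ext ?_ (Prod.ext ?_ rfl)
    · simp
    · refine Equiv.ext fun x => ?_
      simp only [Equiv.trans_apply, Equiv.symm_apply_apply]
  · rw [piv_mid b τ k h0 hn, piv_mid _ _ k h0 hn]
    refine Prod.ext rfl (Prod.ext ?_ rfl)
    ext x; simp only [Equiv.trans_apply, Equiv.swap_apply_self]

lemma piv_ne {n m : ℕ} {L : (Fin (n + 1) → ℕ) → ℕ}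
    (a : (Fin (n + 1) → ℕ) × Equiv.Perm (Fin (n + 1)) × ℕ) (h : St n m L a) : piv a ≠ a := by
  obtain ⟨b, τ, k⟩ := a
  intro he
  by_cases h0 : k = 0
  · subst h0
    rw [piv_down] at he
    simp at he
  by_cases hn : k = n + 1
  · subst hn
    rw [piv_up] at he
    simp at he
  · rw [piv_mid b τ k h0 hn] at he
    have hk := h.2.1
    dsimp only at hk
    simp only [Prod.mk.injEq, true_and, and_true] at he
    have := congrArg (fun e => ((e (τ.symm (Fin.ofNat (n + 1) k)) : Fin (n + 1)) : ℕ)) he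
    simp [Fin.ofNat, Nat.mod_eq_of_lt (show k - 1 < n + 1 by omega),
      Nat.mod_eq_of_lt (show k < n + 1 by omega)] at this
    omega

/-- Fully labelled simplex. -/
def Full (n : ℕ) (L : (Fin n → ℕ) → ℕ) (b : Fin n → ℕ) (τ : Equiv.Perm (Fin n)) : Prop :=
  ∀ t ≤ n, ∃ j ≤ n, L (vtx b τ j) = t

/-- All bases. -/
def bases (n m : ℕ) : Finset (Fin n → ℕ) := Fintype.piFinset fun _ => Finset.range m

lemma mem_bases {n m : ℕ} {b : Fin n → ℕ} : b ∈ bases n m ↔ ∀ i, b i < m := by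
  simp [bases]

/-- Extend a permutation by fixing `0`. -/
def ext0 {n : ℕ} (τ : Equiv.Perm (Fin n)) : Equiv.Perm (Fin (n + 1)) :=
  Equiv.Perm.decomposeFin.symm (0, τ)

lemma ext0_zero {n : ℕ} (τ : Equiv.Perm (Fin n)) : ext0 τ 0 = 0 := by simp [ext0]
lemma ext0_succ {n : ℕ} (τ : Equiv.Perm (Fin n)) (i : Fin n) : ext0 τ i.succ = (τ i).succ := by
  simp [ext0]

lemma ext0_surj {n : ℕ} (τ : Equiv.Perm (Fin (n + 1))) (h : τ 0 = 0) : ∃ τ', ext0 τ' = τ := by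
  refine ⟨(Equiv.Perm.decomposeFin τ).2, ?_⟩
  have h1 : (Equiv.Perm.decomposeFin τ).1 = 0 := by
    have := Equiv.Perm.decomposeFin_symm_apply_zero (Equiv.Perm.decomposeFin τ).1
      (Equiv.Perm.decomposeFin τ).2
    rw [Prod.mk.eta, Equiv.symm_apply_apply, h] at this
    exact this.symm
  rw [ext0, ← h1, Prod.mk.eta, Equiv.symm_apply_apply]

lemma ext0_inj {n : ℕ} {τ τ' : Equiv.Perm (Fin n)} (h : ext0 τ = ext0 τ') : τ = τ' := by
  have := Equiv.Perm.decomposeFin.symm.injective h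
  exact (Prod.ext_iff.1 this).2

lemma vtx_ext0 {n : ℕ} (b : Fin n → ℕ) (τ : Equiv.Perm (Fin n)) (j : ℕ) :
    vtx (Fin.cons 0 b : Fin (n + 1) → ℕ) (ext0 τ) (j + 1) = Fin.cons 0 (vtx b τ j) := by
  funext x
  refine Fin.cases ?_ (fun i => ?_) x
  · simp [vtx, ext0_zero]
  · simp [vtx, ext0_succ]

lemma good_restrict {n m : ℕ} {L : (Fin (n + 1) → ℕ) → ℕ} (hL : Good (n + 1) m L) :
    Good n m (fun v => L (Fin.cons 0 v)) := by
  intro v hv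
  have h := hL (Fin.cons 0 v) (fun i => by refine Fin.cases ?_ (fun i => ?_) i <;> simp [hv])
  refine ⟨?_, fun i => ?_⟩
  · have := (h.2 0).1 (by simp)
    simp at this ⊢; omega
  · have := h.2 i.succ
    simp only [Fin.cons_succ, Fin.val_succ] at this
    dsimp only
    exact ⟨fun hh => by have := this.1 hh; omega, fun hh => by have := this.2 hh; omega⟩

open Classical in
lemma sum_st_zero {n m : ℕ} {L : (Fin (n + 1) → ℕ) → ℕ} (hL : Good (n + 1) m L) :
    ∑ a ∈ ((bases (n + 1) m) ×ˢ (Finset.univ : Finset (Equiv.Perm (Fin (n + 1)))) ×ˢ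
      Finset.range (n + 2)).filter (St n m L), (1 : ZMod 2) = 0 := by
  have key : ∀ a, a ∈ ((bases (n + 1) m) ×ˢ (Finset.univ : Finset (Equiv.Perm (Fin (n + 1)))) ×ˢ
      Finset.range (n + 2)).filter (St n m L) ↔ St n m L a := by
    intro a
    simp only [Finset.mem_filter, Finset.mem_product, mem_bases, Finset.mem_univ, true_and,
      Finset.mem_range]
    exact ⟨fun h => h.2, fun h => ⟨⟨h.1, by have := h.2.1; omega⟩, h⟩⟩
  refine Finset.sum_involution (fun a _ => piv a) ?_ ?_ ?_ ?_
  · intros; decide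
  · intro a ha _; exact piv_ne a ((key a).1 ha)
  · intro a ha; exact (key _).2 (piv_st hL a ((key a).1 ha))
  · intro a ha; exact piv_piv hL a ((key a).1 ha)

open Classical in
lemma sperner_step {n m : ℕ} {L : (Fin (n + 1) → ℕ) → ℕ} (hL : Good (n + 1) m L) :
    ∑ p ∈ (bases (n + 1) m) ×ˢ (Finset.univ : Finset (Equiv.Perm (Fin (n + 1)))),
      (if Full (n + 1) L p.1 p.2 then (1 : ZMod 2) else 0) =
    ∑ p ∈ (bases n m) ×ˢ (Finset.univ : Finset (Equiv.Perm (Fin n))),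
      (if Full n (fun v => L (Fin.cons 0 v)) p.1 p.2 then (1 : ZMod 2) else 0) := by
  have h1 : ∑ p ∈ (bases (n + 1) m) ×ˢ (Finset.univ : Finset (Equiv.Perm (Fin (n + 1)))),
      (if Full (n + 1) L p.1 p.2 then (1 : ZMod 2) else 0) =
      ∑ p ∈ (bases (n + 1) m) ×ˢ (Finset.univ : Finset (Equiv.Perm (Fin (n + 1)))),
       ∑ k ∈ Finset.range (n + 2),
        (if Door (fun j => L (vtx p.1 p.2 j)) (n + 1) k then (1 : ZMod 2) else 0) := by
    refine Finset.sum_congr rfl fun p hp => ?_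
    rw [door_parity _ (n + 1)]
    · unfold Full; congr
    · intro j _
      have := (Finset.mem_product.1 hp).1
      exact (hL _ (vtx_le (mem_bases.1 this) _ _)).1
  have h2 : ∑ p ∈ (bases (n + 1) m) ×ˢ (Finset.univ : Finset (Equiv.Perm (Fin (n + 1)))),
       ∑ k ∈ Finset.range (n + 2),
        (if Door (fun j => L (vtx p.1 p.2 j)) (n + 1) k then (1 : ZMod 2) else 0) =
      ∑ a ∈ (bases (n + 1) m) ×ˢ (Finset.univ : Finset (Equiv.Perm (Fin (n + 1)))) ×ˢ
      Finset.range (n + 2),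
        (if Door (fun j => L (vtx a.1 a.2.1 j)) (n + 1) a.2.2 then (1 : ZMod 2) else 0) := by
    simp only [Finset.sum_product]
  rw [h1, h2, ← Finset.sum_filter, ← Finset.sum_filter]
  set A := ((bases (n + 1) m) ×ˢ (Finset.univ : Finset (Equiv.Perm (Fin (n + 1)))) ×ˢ
      Finset.range (n + 2)).filter
        (fun a => Door (fun j => L (vtx a.1 a.2.1 j)) (n + 1) a.2.2) with hA
  rw [← Finset.sum_filter_add_sum_filter_not A Bdry]
  have h3 : A.filter (fun a => ¬ Bdry a) =
    ((bases (n + 1) m) ×ˢ (Finset.univ : Finset (Equiv.Perm (Fin (n + 1)))) ×ˢ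
      Finset.range (n + 2)).filter (St n m L) := by
    ext a
    simp only [hA, Finset.mem_filter, Finset.mem_product, mem_bases, Finset.mem_univ, true_and,
      Finset.mem_range, St]
    have : a.2.2 < n + 2 ↔ a.2.2 ≤ n + 1 := by omega
    tauto
  rw [h3, sum_st_zero hL, add_zero]
  symm
  refine Finset.sum_bij (fun p _ => ((Fin.cons 0 p.1 : Fin (n + 1) → ℕ), ext0 p.2, 0)) ?_ ?_ ?_ ?_
  · rintro ⟨b, τ⟩ hp
    simp only [Finset.mem_filter, Finset.mem_product, mem_bases, Finset.mem_univ, and_true] at hp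
    obtain ⟨hb, hf⟩ := hp
    simp only [hA, Finset.mem_filter, Finset.mem_product, mem_bases, Finset.mem_univ, true_and,
      Finset.mem_range]
    have hd : Door (fun j => L (vtx (Fin.cons 0 b : Fin (n + 1) → ℕ) (ext0 τ) j)) (n + 1) 0 := by
      intro t ht
      obtain ⟨j, hj, e⟩ := hf t (by omega)
      exact ⟨j + 1, by omega, by omega, by simp only [vtx_ext0]; exact e⟩
    refine ⟨⟨⟨?_, by omega⟩, hd⟩, rfl, by simp, ext0_zero τ⟩
    have hm : 0 < m := by
      rcases Nat.eq_zero_or_pos m with rfl | h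
      · have h0 := (hL (fun _ => 0) (by simp)).2 (Fin.last n)
        have h1 := h0.1 rfl
        have h2 := h0.2 rfl
        simp at h1 h2; omega
      · exact h
    intro i
    refine Fin.cases ?_ (fun i => ?_) i
    · simpa using hm
    · simpa using hb i
  · rintro ⟨b, τ⟩ _ ⟨b', τ'⟩ _ h
    simp only [Prod.mk.injEq, and_true] at h
    have h1 := (Fin.cons_injective2 h.1).2
    exact Prod.ext h1 (ext0_inj h.2)
  · rintro ⟨b, τ, k⟩ ha
    simp only [hA, Finset.mem_filter, Finset.mem_product, mem_bases, Finset.mem_univ, true_and,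
      Finset.mem_range, Bdry] at ha
    obtain ⟨⟨⟨hb, -⟩, hd⟩, rfl, hb0, hτ⟩ := ha
    obtain ⟨τ, rfl⟩ := ext0_surj τ hτ
    have hbe : (Fin.cons 0 (Fin.tail b) : Fin (n + 1) → ℕ) = b := by
      rw [← hb0]; exact Fin.cons_self_tail b
    refine ⟨(Fin.tail b, τ), ?_, ?_⟩
    · simp only [Finset.mem_filter, Finset.mem_product, mem_bases, Finset.mem_univ, and_true]
      refine ⟨fun i => hb i.succ, fun t ht => ?_⟩
      obtain ⟨j, hj, hj0, e⟩ := hd t (by omega)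
      refine ⟨j - 1, by omega, ?_⟩
      dsimp only
      rw [← vtx_ext0, show j - 1 + 1 = j by omega, hbe]
      exact e
    · simp only [hbe]
  · intros; rfl

open Classical in
lemma sperner_sum (m : ℕ) : ∀ (n : ℕ) (L : (Fin n → ℕ) → ℕ), Good n m L →
    ∑ p ∈ (bases n m) ×ˢ (Finset.univ : Finset (Equiv.Perm (Fin n))),
      (if Full n L p.1 p.2 then (1 : ZMod 2) else 0) = 1 := by
  intro n
  induction n with
  | zero =>
    intro L hL
    have : ∀ p ∈ (bases 0 m) ×ˢ (Finset.univ : Finset (Equiv.Perm (Fin 0))),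
      (if Full 0 L p.1 p.2 then (1 : ZMod 2) else 0) = 1 := by
      intro p _
      rw [if_pos]
      intro t ht
      have := (hL (vtx p.1 p.2 0) (fun i => i.elim0)).1
      exact ⟨0, le_rfl, by omega⟩
    rw [Finset.sum_congr rfl this]
    simp [bases]
  | succ n ih =>
    intro L hL
    rw [sperner_step hL]
    exact ih _ (good_restrict hL)

lemma sperner {n m : ℕ} {L : (Fin n → ℕ) → ℕ} (hL : Good n m L) :
    ∃ (b : Fin n → ℕ) (τ : Equiv.Perm (Fin n)), (∀ i, b i < m) ∧ Full n L b τ := by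
  classical
  by_contra! h
  have := sperner_sum m n L hL
  rw [Finset.sum_eq_zero] at this
  · exact absurd this (by decide)
  · intro p hp
    rw [if_neg]
    exact h _ _ (mem_bases.1 (Finset.mem_product.1 hp).1)

lemma ord_le_zero_of_disjoint {Y : Type*} [TopologicalSpace Y] (β : Set (Set Y))
    (h : ∀ U ∈ β, ∀ V ∈ β, (U ∩ V).Nonempty → U = V) : ord β = 0 := by
  unfold ord
  rw [← le_zero_iff]
  refine iSup₂_le fun n hn => ?_
  obtain ⟨f, hf, hm, x, hx⟩ := hn
  rw [mem_iInter] at hx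
  rcases n with _ | n
  · simp
  · have := hf (h _ (hm 0) _ (hm 1) ⟨x, hx 0, hx 1⟩)
    simp at this

lemma topDim_eq_zero {K : Type*} [TopologicalSpace K] [CompactSpace K] [T2Space K]
    [TotallyDisconnectedSpace K] : topDim K = 0 := by
  unfold topDim
  rw [← le_zero_iff]
  refine iSup₂_le fun α hα => ?_
  obtain ⟨ho, hc⟩ := hα
  let U : α → TopologicalSpace.Opens K := fun a => ⟨a.1, ho a.1 a.2⟩
  have hU : TopologicalSpace.IsOpenCover U := by
    refine .of_sets _ ?_
    rw [← hc, sUnion_eq_iUnion]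
  obtain ⟨n, W, h1, h2, h3⟩ := hU.exists_finite_nonempty_disjoint_clopen_cover
  unfold covD
  have hmem : (range fun j => (W j : Set K)) ∈
      {β : Set (Set K) | IsOpenCover β ∧ Refines β α} := by
    refine ⟨⟨?_, ?_⟩, ?_⟩
    · rintro _ ⟨j, rfl⟩
      exact (W j).isClopen.isOpen
    · rw [sUnion_range]; exact univ_subset_iff.1 h2
    · rintro _ ⟨j, rfl⟩
      obtain ⟨i, hi⟩ := (h1 j).2
      exact ⟨i.1, i.2, hi⟩
  refine (iInf₂_le _ hmem).trans ?_
  · refine (ord_le_zero_of_disjoint _ ?_).le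
    rintro _ ⟨i, rfl⟩ _ ⟨j, rfl⟩ ⟨x, hx, hy⟩
    by_contra hne
    have hij : i ≠ j := by rintro rfl; exact hne rfl
    have := TopologicalSpace.Clopens.coe_disjoint.2 (h3 hij)
    exact Set.disjoint_left.1 this hx hy

lemma exists_chain_points {K : Type*} [MetricSpace K] [CompactSpace K] (hpos : 0 < topDim K) :
    ∃ p q : K, p ≠ q ∧ ∀ δ > 0, ∃ (m : ℕ) (x : ℕ → K), x 0 = p ∧ x m = q ∧
      ∀ i < m, dist (x i) (x (i + 1)) < δ := by
  have h : ¬ TotallyDisconnectedSpace K := fun h => by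
    rw [topDim_eq_zero] at hpos; exact lt_irrefl _ hpos
  rw [totallyDisconnectedSpace_iff_connectedComponent_subsingleton] at h
  push Not at h
  obtain ⟨r, hr⟩ := h
  obtain ⟨p, hp, q, hq, hpq⟩ := hr
  refine ⟨p, q, hpq, fun δ hδ => ?_⟩
  let S : Set K := {z | ∃ (m : ℕ) (x : ℕ → K), x 0 = p ∧ x m = z ∧
      ∀ i < m, dist (x i) (x (i + 1)) < δ}
  have hext : ∀ z ∈ S, ∀ y, dist z y < δ → y ∈ S := by
    rintro z ⟨m, x, h0, hm, hx⟩ y hy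
    refine ⟨m + 1, Function.update x (m + 1) y, ?_, ?_, ?_⟩
    · rw [Function.update_of_ne (by omega), h0]
    · simp
    · intro i hi
      rw [Function.update_of_ne (by omega)]
      rcases Nat.lt_succ_iff_lt_or_eq.1 hi with h | rfl
      · rw [Function.update_of_ne (by omega)]; exact hx i h
      · rw [Function.update_self, hm]; exact hy
  have hclopen : IsClopen S := by
    constructor
    · rw [← isOpen_compl_iff, Metric.isOpen_iff]
      intro z hz
      refine ⟨δ, hδ, fun y hy hyS => hz (hext y hyS z ?_)⟩
      simpa using hy
    · rw [Metric.isOpen_iff]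
      intro z hz
      refine ⟨δ, hδ, fun y hy => hext z hz y ?_⟩
      rw [dist_comm]; simpa using hy
  have hpS : p ∈ S := ⟨0, fun _ => p, rfl, rfl, by simp⟩
  have hsub := hclopen.connectedComponent_subset hpS
  rw [← connectedComponent_eq hp] at hsub
  exact hsub hq

lemma lebesgue_core {K : Type*} [MetricSpace K] [CompactSpace K] {p q : K}
    (hchain : ∀ δ > 0, ∃ (m : ℕ) (x : ℕ → K), x 0 = p ∧ x m = q ∧
      ∀ i < m, dist (x i) (x (i + 1)) < δ)
    {n : ℕ} {ι : Type*} (c : ι → Set (Fin n → K)) (hopen : ∀ s, IsOpen (c s))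
    (hcov : ∀ u, ∃ s, u ∈ c s)
    (hsep : ∀ s, ∀ i : Fin n, ∀ u ∈ c s, ∀ v ∈ c s, u i = p → v i = q → False) :
    ∃ (f : Fin (n + 1) → ι) (u : Fin n → K), Function.Injective f ∧ ∀ j, u ∈ c (f j) := by
  classical
  obtain ⟨δ, hδ, hleb⟩ := lebesgue_number_lemma_of_metric (s := univ) isCompact_univ hopen
    (fun u _ => mem_iUnion.2 (hcov u))
  obtain ⟨m, x, hx0, hxm, hx⟩ := hchain δ hδ
  choose s hs using fun v : Fin n → ℕ => hleb (fun i => x (v i)) (mem_univ _)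
  have hmem : ∀ v : Fin n → ℕ, (fun i => x (v i)) ∈ c (s v) := fun v =>
    hs v (Metric.mem_ball_self hδ)
  let P : ι → ℕ → Prop := fun a t => t = n ∨ ∃ i : Fin n, t + i + 1 = n ∧
    ∃ v : Fin n → ℕ, s v = a ∧ v i = 0
  have hP : ∀ a, ∃ t, P a t := fun a => ⟨n, Or.inl rfl⟩
  let l : ι → ℕ := fun a => Nat.find (hP a)
  have hgood : Good n m (fun v => l (s v)) := by
    intro v hv
    refine ⟨Nat.find_min' _ (Or.inl rfl), fun i => ⟨fun hi => ?_, fun hi hl => ?_⟩⟩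
    · have hi2 := i.2
      have : l (s v) ≤ n - 1 - i :=
        Nat.find_min' _ (Or.inr ⟨i, by omega, v, rfl, hi⟩)
      dsimp only
      omega
    · have hi2 := i.2
      replace hl : l (s v) + (i : ℕ) + 1 = n := hl
      rcases (Nat.find_spec (hP (s v)) : P (s v) (l (s v))) with h | ⟨i', h, v', hv', h0⟩
      · replace h : l (s v) = n := h
        omega
      · replace h : l (s v) + (i' : ℕ) + 1 = n := h
        have : i' = i := Fin.ext (by omega)
        subst this
        refine hsep (s v) i' _ (hv' ▸ hmem v') _ (hmem v) ?_ ?_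
        · simp [h0, hx0]
        · simp [hi, hxm]
  obtain ⟨b, τ, hb, hfull⟩ := sperner hgood
  have hfull' : ∀ t : Fin (n + 1), ∃ j, l (s (vtx b τ j)) = t := fun t => by
    obtain ⟨j, -, h⟩ := hfull t (by omega)
    exact ⟨j, h⟩
  choose j hj using hfull'
  refine ⟨fun t => s (vtx b τ (j t)), fun i => x (b i), ?_, ?_⟩
  · intro t t' h
    have : l (s (vtx b τ (j t))) = l (s (vtx b τ (j t'))) := congrArg l h
    rw [hj, hj] at this
    exact Fin.ext this
  · intro t
    apply hs
    rw [Metric.mem_ball, dist_pi_lt_iff hδ]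
    intro i
    simp only [vtx]
    split_ifs
    · exact hx _ (hb i)
    · simpa using hδ

lemma compat_facts {Y : Type*} [TopologicalSpace Y] [CompactSpace Y] {d : Y → Y → ℝ}
    (hd : IsCompatMetric d) {A B : Set Y} (hA : IsClosed A) (hB : IsClosed B)
    (hAB : Disjoint A B) :
    (∃ M, ∀ x y, d x y ≤ M) ∧ ∃ ε > 0, ∀ a ∈ A, ∀ b ∈ B, ε ≤ d a b := by
  letI : MetricSpace Y := MetricSpace.ofDistTopology d hd.refl hd.symm hd.triangle
    hd.isOpen_iff hd.eq_of
  have hdd : ∀ x y : Y, d x y = dist x y := fun _ _ => rfl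
  constructor
  · refine ⟨Metric.diam (univ : Set Y), fun x y => ?_⟩
    rw [hdd]
    exact Metric.dist_le_diam_of_mem isCompact_univ.isBounded (mem_univ _) (mem_univ _)
  · obtain ⟨ε, hε, h⟩ := Metric.exists_pos_forall_lt_edist hA.isCompact hB hAB
    refine ⟨ε, by exact_mod_cast hε, fun a ha b hb => ?_⟩
    have := h a ha b hb
    rw [edist_nndist, ENNReal.coe_lt_coe] at this
    rw [hdd, ← coe_nndist]
    exact_mod_cast this.le

lemma shift_iterate {K : Type*} (x : ℤ → K) (i : ℕ) (k : ℤ) :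
    (shift K)^[i] x k = x (k + i) := by
  induction i generalizing x with
  | zero => simp
  | succ i ih =>
    rw [Function.iterate_succ_apply, ih]
    simp only [shift]
    congr 1
    push_cast; ring

lemma lt_of_mesh {Y : Type*} [TopologicalSpace Y] {d : Y → Y → ℝ} {T : Y → Y} {n : ℕ} {M ε : ℝ}
    (hM : ∀ x y, d x y ≤ M) (hM0 : 0 ≤ M) {α : Set (Set Y)} (h : mesh (dynDist d T n) α < ε)
    {U : Set Y} (hU : U ∈ α) {x y : Y} (hx : x ∈ U) (hy : y ∈ U) {i : ℕ} (hi : i < n) :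
    d (T^[i] x) (T^[i] y) < ε := by
  have h1 : ∀ x y, d (T^[i] x) (T^[i] y) ≤ dynDist d T n x y := fun x y =>
    le_csSup ⟨M, by rintro _ ⟨j, -, rfl⟩; exact hM _ _⟩ ⟨i, hi, rfl⟩
  have h2 : ∀ x y, dynDist d T n x y ≤ M := fun x y =>
    Real.sSup_le (by rintro _ ⟨j, -, rfl⟩; exact hM _ _) hM0
  have h3 : dynDist d T n x y ≤ diamD (dynDist d T n) U :=
    le_csSup ⟨M, by rintro _ ⟨a, -, b, -, rfl⟩; exact h2 _ _⟩ ⟨x, hx, y, hy, rfl⟩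
  have h4 : ∀ V, diamD (dynDist d T n) V ≤ M := fun V =>
    Real.sSup_le (by rintro _ ⟨a, -, b, -, rfl⟩; exact h2 _ _) hM0
  have h5 : diamD (dynDist d T n) U ≤ mesh (dynDist d T n) α :=
    le_csSup ⟨M, by rintro _ ⟨V, -, rfl⟩; exact h4 _⟩ ⟨U, hU, rfl⟩
  linarith [h1 x y]

lemma widim_ge {K : Type*} [MetricSpace K] [CompactSpace K] {p q : K}
    (hchain : ∀ δ > 0, ∃ (m : ℕ) (x : ℕ → K), x 0 = p ∧ x m = q ∧
      ∀ i < m, dist (x i) (x (i + 1)) < δ)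
    {d : (ℤ → K) → (ℤ → K) → ℝ} {M ε : ℝ} (hM : ∀ x y, d x y ≤ M) (hM0 : 0 ≤ M)
    (hε : ∀ a : ℤ → K, a 0 = p → ∀ b : ℤ → K, b 0 = q → ε ≤ d a b) (n : ℕ) :
    (n : ℕ∞) ≤ widim ε (dynDist d (shift K) n) := by
  unfold widim
  refine le_iInf₂ fun α hα => ?_
  unfold covD
  refine le_iInf₂ fun β hβ => ?_
  obtain ⟨hαc, hmesh⟩ := hα
  obtain ⟨⟨hβo, hβc⟩, href⟩ := hβ
  let g : (Fin n → K) → (ℤ → K) := fun u k =>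
    if h : 0 ≤ k ∧ k.toNat < n then u ⟨k.toNat, h.2⟩ else p
  have hg : Continuous g := by
    refine continuous_pi fun k => ?_
    by_cases h : 0 ≤ k ∧ k.toNat < n
    · simp only [g, dif_pos h]; exact continuous_apply _
    · simp only [g, dif_neg h]; exact continuous_const
  have hgi : ∀ u (i : Fin n), (shift K)^[(i : ℕ)] (g u) 0 = u i := by
    intro u i
    rw [shift_iterate]
    simp [g]
  obtain ⟨f, u, hf, hu⟩ := lebesgue_core hchain (fun V : β => g ⁻¹' V.1)
    (fun V => (hβo V.1 V.2).preimage hg)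
    (fun u => by
      have : g u ∈ ⋃₀ β := by rw [hβc]; trivial
      obtain ⟨V, hV, h⟩ := this
      exact ⟨⟨V, hV⟩, h⟩)
    (fun V i u hu v hv hup hvq => by
      obtain ⟨U, hU, hVU⟩ := href V.1 V.2
      have h1 := lt_of_mesh hM hM0 hmesh hU (hVU hu) (hVU hv) i.2
      have h2 := hε _ ((hgi u i).trans hup) _ ((hgi v i).trans hvq)
      exact absurd h1 (not_lt.2 h2))
  unfold ord
  exact le_iSup₂_of_le n ⟨fun j => (f j).1, Subtype.val_injective.comp hf, fun j => (f j).2,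
    g u, mem_iInter.2 hu⟩ le_rfl

/-- for a compact metric space `K` (possibly infinite dimensional) with
`dim K > 0`, the mean dimension of the full shift on the alphabet `K` is at least `1`. -/
theorem one_le_mdim_fullshift {K : Type*} [MetricSpace K] [CompactSpace K]
    (hpos : 0 < topDim K)
    (d : (ℤ → K) → (ℤ → K) → ℝ) (hd : IsCompatMetric d) :
    1 ≤ mdim (shift K) d := by
  obtain ⟨p, q, hpq, hchain⟩ := exists_chain_points hpos
  have hA : IsClosed {x : ℤ → K | x 0 = p} := isClosed_singleton.preimage (continuous_apply 0)
  have hB : IsClosed {x : ℤ → K | x 0 = q} := isClosed_singleton.preimage (continuous_apply 0)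
  obtain ⟨⟨M, hM⟩, ε, hε, hsep⟩ := compat_facts hd hA hB
    (Set.disjoint_left.2 fun x hx hy => hpq (hx.symm.trans hy))
  have hM0 : 0 ≤ M := by
    have := hM (fun _ => p) (fun _ => p)
    rwa [hd.refl] at this
  unfold mdim
  refine le_iSup₂_of_le ε hε (le_liminf_of_le (by isBoundedDefault) ?_)
  filter_upwards [eventually_ge_atTop 1] with n hn
  have h := widim_ge hchain hM hM0 hsep n
  have h' : (n : ℝ≥0∞) ≤ (widim ε (dynDist d (shift K) n) : ℝ≥0∞) := by
    have := ENat.toENNReal_le.2 h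
    simpa using this
  rw [ENNReal.le_div_iff_mul_le (Or.inl (by simp; omega)) (Or.inl (by simp)), one_mul]
  exact h'

end MeanDimPaper
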